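/- In the setting of Proposition 3.3 — G ∈ ℝ^{pd×pd} symmetric with Λ_min(G) ≥ 2πm_ξ > 0, β = G^{−1}g, Ĝ symmetric positive semi-definite and ĝ with |Ĝ−G|_∞ ≤ δ and |ĝ−g|_∞ ≤ δ, s_in δ ≤ πm_ξ/16, λ ≥ 4(‖β‖_1+1)δ, and β̂ a global minimizer of tr(M^⊤ĜM − 2M^⊤ĝ) + λ|M|_1 — suppose additionally that min{|β_{ij}| : β_{ij} ≠ 0} > 2𝔱 where 𝔱 := min(4‖G^{−1}‖_1 λ, 6√(s_in) λ/(πm_ξ)). Then the thresholded estimator β̂(𝔱), defined entrywise by β̂(𝔱)_{ij} := β̂_{ij}·1{|β̂_{ij}| > 𝔱}, satisfies sign(β̂(𝔱)_{ij}) = sign(β_{ij}) for all i, j; in particular the support of β̂(𝔱) equals the support of β. -/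

import Mathlib

open Matrix
open scoped Classical

/-- Maximum absolute column-sum norm `‖M‖₁ = max_j ∑_i |M i j|`. -/
noncomputable def colOneNorm {a b : ℕ} (M : Matrix (Fin a) (Fin b) ℝ) : ℝ :=
  ⨆ j : Fin b, ∑ i, |M i j|

/-- Maximum number of nonzero entries in a column, `s_in = max_j |{i : β i j ≠ 0}|`. -/
noncomputable def maxColSupport {a b : ℕ} (β : Matrix (Fin a) (Fin b) ℝ) : ℕ :=
  Finset.univ.sup fun j : Fin b => (Finset.univ.filter fun i : Fin a => β i j ≠ 0).card

/-- Entrywise hard-thresholding of a matrix at level `t`. -/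
noncomputable def hardThreshold {a b : ℕ} (M : Matrix (Fin a) (Fin b) ℝ) (t : ℝ) :
    Matrix (Fin a) (Fin b) ℝ :=
  Matrix.of fun i j => if t < |M i j| then M i j else 0

theorem aux_quad {n : ℕ} (G : Matrix (Fin n) (Fin n) ℝ) (hG : G.IsHermitian) (c : ℝ)
    (h : ∀ i, c ≤ hG.eigenvalues i) (x : Fin n → ℝ) : c * (x ⬝ᵥ x) ≤ x ⬝ᵥ (G *ᵥ x) := by
  have hs := hG.spectral_theorem
  have key : (G - c • (1 : Matrix (Fin n) (Fin n) ℝ)).PosSemidef := by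
    set U : Matrix (Fin n) (Fin n) ℝ := (hG.eigenvectorUnitary : Matrix (Fin n) (Fin n) ℝ) with hU
    have hUU : U * Uᴴ = 1 := Unitary.coe_mul_star_self hG.eigenvectorUnitary
    have hE : G - c • (1 : Matrix (Fin n) (Fin n) ℝ)
        = U * (Matrix.diagonal (fun i => hG.eigenvalues i - c)) * Uᴴ := by
      have h1 : Matrix.diagonal (fun i => hG.eigenvalues i - c)
          = Matrix.diagonal hG.eigenvalues - c • (1 : Matrix (Fin n) (Fin n) ℝ) := by
        ext i j
        by_cases hij : i = j
        · subst hij; simp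
        · simp [hij]
      rw [h1, mul_sub, sub_mul]
      have h2 : U * (c • (1 : Matrix (Fin n) (Fin n) ℝ)) * Uᴴ = c • 1 := by
        rw [Matrix.mul_smul, Matrix.smul_mul, Matrix.mul_one, hUU]
      rw [h2]
      congr 1
    rw [hE]
    apply Matrix.PosSemidef.mul_mul_conjTranspose_same
    apply Matrix.PosSemidef.diagonal
    intro i
    simpa using h i
  have := key.dotProduct_mulVec_nonneg x
  simp only [star_trivial, Matrix.sub_mulVec, Matrix.smul_mulVec, Matrix.one_mulVec, dotProduct_sub,
    dotProduct_smul, smul_eq_mul] at this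
  linarith

theorem aux_dot {n : ℕ} (x y : Fin n → ℝ) (c : ℝ) (h : ∀ i, |y i| ≤ c) :
    |x ⬝ᵥ y| ≤ c * ∑ i, |x i| := by
  unfold dotProduct
  refine (Finset.abs_sum_le_sum_abs _ _).trans ?_
  rw [Finset.mul_sum]
  apply Finset.sum_le_sum
  intro i _
  rw [abs_mul, mul_comm]
  exact mul_le_mul_of_nonneg_right (h i) (abs_nonneg _)

theorem aux_mulVec {n : ℕ} (D : Matrix (Fin n) (Fin n) ℝ) (x : Fin n → ℝ) (c : ℝ)
    (h : ∀ i j, |D i j| ≤ c) (i : Fin n) : |(D *ᵥ x) i| ≤ c * ∑ k, |x k| := by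
  have := aux_dot x (D i) c (h i)
  rwa [dotProduct_comm] at this

theorem aux_col_le {a b : ℕ} (M : Matrix (Fin a) (Fin b) ℝ) (j : Fin b) :
    ∑ i, |M i j| ≤ colOneNorm M :=
  le_ciSup (f := fun j => ∑ i, |M i j|) (Set.finite_range _).bddAbove j

theorem aux_symm {n : ℕ} (A : Matrix (Fin n) (Fin n) ℝ) (hA : A.IsHermitian) (x y : Fin n → ℝ) :
    x ⬝ᵥ (A *ᵥ y) = y ⬝ᵥ (A *ᵥ x) := by
  have hT : Aᵀ = A := by simpa using hA.eq
  rw [dotProduct_mulVec, ← mulVec_transpose, hT, dotProduct_comm]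

/-- Column-wise error bounds. -/
theorem aux_vec {n : ℕ} (c δ lam B : ℝ) (s : ℕ) (hc : 0 < c) (hδ : 0 < δ)
    (G : Matrix (Fin n) (Fin n) ℝ) (hquad : ∀ x, 2 * c * (x ⬝ᵥ x) ≤ x ⬝ᵥ (G *ᵥ x))
    (hG : G.IsHermitian) (hinv : G⁻¹ * G = 1)
    (Gh : Matrix (Fin n) (Fin n) ℝ) (hGh : Gh.PosSemidef)
    (g b gh bh : Fin n → ℝ) (hb : G *ᵥ b = g)
    (hGd : ∀ i j, |Gh i j - G i j| ≤ δ) (hgd : ∀ i, |gh i - g i| ≤ δ)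
    (hs : (Finset.univ.filter fun i => b i ≠ 0).card ≤ s)
    (hsd : s * δ ≤ c / 16) (hB : ∑ i, |b i| ≤ B) (hlam : 4 * (B + 1) * δ ≤ lam)
    (hmin : ∀ x : Fin n → ℝ, bh ⬝ᵥ (Gh *ᵥ bh) - 2 * (bh ⬝ᵥ gh) + lam * ∑ i, |bh i| ≤
      x ⬝ᵥ (Gh *ᵥ x) - 2 * (x ⬝ᵥ gh) + lam * ∑ i, |x i|) (i : Fin n) :
    |bh i - b i| ≤ min (4 * colOneNorm G⁻¹ * lam) (6 * Real.sqrt s * lam / c) := by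
  have hb0 : 0 ≤ ∑ i, |b i| := Finset.sum_nonneg fun _ _ => abs_nonneg _
  have hlam0 : 0 < lam := by nlinarith
  obtain ⟨h, rfl⟩ : ∃ h, bh = b + h := ⟨bh - b, by simp⟩
  have hbd : δ * ∑ i, |b i| + δ ≤ lam / 4 := by nlinarith
  have hGd' : ∀ i j, |(Gh - G) i j| ≤ δ := hGd
  -- the noise at the truth
  have hr : ∀ i, |(Gh *ᵥ b - gh) i| ≤ lam / 4 := by
    intro i
    have h1 := aux_mulVec (Gh - G) b δ hGd' i
    have h2 := hgd i
    have h3 : (Gh *ᵥ b - gh) i = ((Gh - G) *ᵥ b) i - (gh i - g i) := by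
      rw [Matrix.sub_mulVec, hb]; simp
    rw [h3]
    have := abs_sub (((Gh - G) *ᵥ b) i) (gh i - g i)
    linarith
  have hq0 : 0 ≤ h ⬝ᵥ (Gh *ᵥ h) := by simpa using hGh.dotProduct_mulVec_nonneg h
  -- basic inequality
  have hbasic : h ⬝ᵥ (Gh *ᵥ h) ≤ lam / 2 * ∑ i, |h i| + lam * ∑ i, |b i|
      - lam * ∑ i, |(b + h) i| := by
    have h1 := hmin b
    have h2 := aux_symm Gh hGh.1 b h
    have h3 := aux_dot h _ _ hr
    simp only [Matrix.mulVec_add, dotProduct_add, add_dotProduct, dotProduct_sub] at h1 h3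
    have h4 := neg_abs_le (h ⬝ᵥ (Gh *ᵥ b) - h ⬝ᵥ gh)
    linarith
  have hh1 : ∑ i, |h i| ≤ ∑ i, |b i| + ∑ i, |(b + h) i| := by
    rw [← Finset.sum_add_distrib]
    apply Finset.sum_le_sum
    intro i _
    have := abs_sub ((b + h) i) (b i)
    simp only [Pi.add_apply, add_sub_cancel_left] at this ⊢
    linarith
  have hbh3 : ∑ i, |(b + h) i| ≤ 3 * ∑ i, |b i| := by
    have : 0 ≤ lam * (3 * ∑ i, |b i| - ∑ i, |(b + h) i|) := by nlinarith
    have := nonneg_of_mul_nonneg_right this hlam0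
    linarith
  simp only [Pi.add_apply, add_sub_cancel_left]
  apply le_min
  · -- KKT
    have hkkt : ∀ k, |(Gh *ᵥ (b + h) - gh) k| ≤ lam / 2 := by
      intro k
      set r := (Gh *ᵥ (b + h) - gh) k with hrdef
      have hA : 0 ≤ Gh k k := by
        simpa using hGh.diag_nonneg (i := k)
      have hper : ∀ e : ℝ, 0 ≤ e ^ 2 * Gh k k + 2 * e * r + lam * |e| := by
        intro e
        have h1 := hmin (b + h + Pi.single k e)
        have h2 := aux_symm Gh hGh.1 (b + h) (Pi.single k e)
        have h3 : Pi.single k e ⬝ᵥ (Gh *ᵥ Pi.single k e) = e ^ 2 * Gh k k := by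
          simp; ring
        have h4 : Pi.single k e ⬝ᵥ (Gh *ᵥ (b + h)) - Pi.single k e ⬝ᵥ gh = e * r := by
          rw [← dotProduct_sub, single_dotProduct]
        have h5 : ∑ i, |(b + h + (Pi.single k e : Fin n → ℝ)) i| ≤ ∑ i, |(b + h) i| + |e| := by
          have : |e| = ∑ i, |(Pi.single k e : Fin n → ℝ) i| := by
            rw [Finset.sum_eq_single k]
            · simp
            · intro j _ hj; simp [hj]
            · simp
          rw [this, ← Finset.sum_add_distrib]
          exact Finset.sum_le_sum fun i _ => abs_add_le _ _
        have h6 := mul_le_mul_of_nonneg_left h5 hlam0.le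
        rw [Matrix.mulVec_add Gh (b + h) (Pi.single k e), dotProduct_add,
          add_dotProduct (b + h) (Pi.single k e), add_dotProduct (b + h) (Pi.single k e),
          add_dotProduct (b + h) (Pi.single k e), h3, h2] at h1
        linarith
      by_contra hcon
      push Not at hcon
      have hgap : 0 < 2 * |r| - lam := by linarith
      set e := (2 * |r| - lam) / (Gh k k + 1) with he
      have he0 : 0 < e := by positivity
      have hek : e * (Gh k k + 1) = 2 * |r| - lam := by
        rw [he]; field_simp
      have hfin : 0 ≤ e ^ 2 * Gh k k - 2 * e * |r| + lam * e := by
        rcases le_total 0 r with h0 | h0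
        · have := hper (-e)
          rw [abs_neg, abs_of_pos he0] at this
          rw [abs_of_nonneg h0]; linarith
        · have := hper e
          rw [abs_of_pos he0] at this
          rw [abs_of_nonpos h0]; linarith
      have : e ^ 2 * Gh k k - 2 * e * |r| + lam * e = - e ^ 2 := by
        have : 2 * |r| = e * (Gh k k + 1) + lam := by linarith
        linear_combination (-e) * this
      nlinarith
    have hGh' : ∀ k, |(G *ᵥ h) k| ≤ 4 * lam := by
      intro k
      have h1 := aux_mulVec (Gh - G) (b + h) δ hGd' k
      have h2 := hgd k
      have h3 := hkkt k
      have h4 : (G *ᵥ h) k = (Gh *ᵥ (b + h) - gh) k - ((Gh - G) *ᵥ (b + h)) k + (gh k - g k) := by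
        rw [← hb]
        simp only [Matrix.sub_mulVec, Matrix.mulVec_add, Pi.sub_apply, Pi.add_apply]; ring
      rw [h4]
      have h5 := mul_le_mul_of_nonneg_left hbh3 hδ.le
      rw [abs_le] at h1 h2 h3 ⊢
      constructor <;> nlinarith
    have hI : h = G⁻¹ *ᵥ (G *ᵥ h) := by rw [Matrix.mulVec_mulVec, hinv, Matrix.one_mulVec]
    have h1 := aux_dot (G⁻¹ i) (G *ᵥ h) _ hGh'
    have h2 : h i = G⁻¹ i ⬝ᵥ (G *ᵥ h) := congrFun hI i
    rw [← h2] at h1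
    have h3 : ∑ k, |G⁻¹ i k| ≤ colOneNorm G⁻¹ := by
      have h4 := aux_col_le G⁻¹ i
      have h5 : ∀ k, G⁻¹ i k = G⁻¹ k i := fun k => by simpa using (hG.inv.apply i k).symm
      simpa only [h5] using h4
    have := mul_le_mul_of_nonneg_left h3 (by positivity : 0 ≤ 4 * lam)
    linarith
  · -- ℓ2 bound
    set S := Finset.univ.filter fun i => b i ≠ 0 with hS
    set a := ∑ i ∈ S, |h i| with ha
    have ha0 : 0 ≤ a := Finset.sum_nonneg fun _ _ => abs_nonneg _
    have hcone : ∑ i, |b i| - ∑ i, |(b + h) i| ≤ 2 * a - ∑ i, |h i| := by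
      have : 2 * a = ∑ i, if b i ≠ 0 then 2 * |h i| else 0 := by
        rw [ha, hS, Finset.sum_filter, Finset.mul_sum]
        apply Finset.sum_congr rfl
        intro i _; split_ifs <;> simp
      rw [this, ← Finset.sum_sub_distrib, ← Finset.sum_sub_distrib]
      apply Finset.sum_le_sum
      intro i _
      by_cases h0 : b i = 0
      · simp [h0]
      · have := abs_sub ((b + h) i) (h i)
        simp only [Pi.add_apply, add_sub_cancel_right] at this
        simp only [Pi.add_apply, ne_eq, h0, not_false_eq_true, if_true]
        linarith
    have hcone' := mul_le_mul_of_nonneg_left hcone hlam0.le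
    have hb2 : h ⬝ᵥ (Gh *ᵥ h) ≤ 2 * lam * a - lam / 2 * ∑ i, |h i| := by linarith
    have h4a : ∑ i, |h i| ≤ 4 * a := by
      have : 0 ≤ lam * (4 * a - ∑ i, |h i|) := by linarith
      have := nonneg_of_mul_nonneg_right this hlam0
      linarith
    have hl0 : 0 ≤ ∑ i, |h i| := Finset.sum_nonneg fun _ _ => abs_nonneg _
    have hhh : h ⬝ᵥ h = ∑ i, h i ^ 2 := by simp [dotProduct, sq]
    set N := h ⬝ᵥ h with hN
    have hN0 : 0 ≤ N := by rw [hhh]; positivity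
    have hCS : a ^ 2 ≤ s * N := by
      have h1 : a ^ 2 ≤ S.card * ∑ i ∈ S, |h i| ^ 2 := sq_sum_le_card_mul_sum_sq
      have h2 : ∑ i ∈ S, |h i| ^ 2 ≤ N := by
        rw [hhh]
        simp only [sq_abs]
        exact Finset.sum_le_sum_of_subset_of_nonneg (Finset.subset_univ _) fun _ _ _ => sq_nonneg _
      have h3 : (S.card : ℝ) ≤ s := by exact_mod_cast hs
      calc a ^ 2 ≤ S.card * ∑ i ∈ S, |h i| ^ 2 := h1
        _ ≤ s * N := mul_le_mul h3 h2 (Finset.sum_nonneg fun _ _ => sq_nonneg _) (by positivity)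
    have hlow : c * N ≤ h ⬝ᵥ (Gh *ᵥ h) := by
      have h1 := hquad h
      have h2 := aux_dot h _ _ (aux_mulVec (Gh - G) h δ hGd')
      rw [Matrix.sub_mulVec, dotProduct_sub] at h2
      have h3 := (abs_le.mp h2).1
      have h4 : (∑ i, |h i|) ^ 2 ≤ 16 * (s * N) := by nlinarith
      have h5 := mul_le_mul_of_nonneg_left h4 hδ.le
      have h6 := mul_le_mul_of_nonneg_right hsd hN0
      nlinarith
    have hsN : Real.sqrt (s * N) = Real.sqrt s * Real.sqrt N := Real.sqrt_mul (by positivity) _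
    have haS : a ≤ Real.sqrt s * Real.sqrt N := by
      rw [← hsN]; exact Real.le_sqrt_of_sq_le hCS
    have hfin : Real.sqrt N ≤ 6 * Real.sqrt s * lam / c := by
      rw [le_div_iff₀ hc]
      rcases (Real.sqrt_nonneg N).eq_or_lt with h0 | h0
      · rw [← h0]; simp; positivity
      · have h1 : c * (Real.sqrt N * Real.sqrt N) ≤ 2 * lam * (Real.sqrt s * Real.sqrt N) := by
          rw [Real.mul_self_sqrt hN0]
          have h2 := mul_le_mul_of_nonneg_left haS (by positivity : 0 ≤ 2 * lam)
          have h3 : 0 ≤ lam / 2 * ∑ i, |h i| := by positivity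
          linarith
        have h2 : Real.sqrt N * c ≤ 2 * lam * Real.sqrt s := by
          apply le_of_mul_le_mul_right _ h0
          linarith
        have h3 : 0 ≤ lam * Real.sqrt s := by positivity
        linarith
    refine le_trans ?_ hfin
    apply Real.le_sqrt_of_sq_le
    rw [hhh, sq_abs]
    exact Finset.single_le_sum (f := fun i => h i ^ 2) (fun _ _ => sq_nonneg _) (Finset.mem_univ i)

theorem aux_obj {n p : ℕ} (A : Matrix (Fin n) (Fin n) ℝ) (g M : Matrix (Fin n) (Fin p) ℝ)
    (lam : ℝ) :
    Matrix.trace (Mᵀ * A * M) - 2 * Matrix.trace (Mᵀ * g) + lam * ∑ i, ∑ j, |M i j|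
      = ∑ j, (Mᵀ j ⬝ᵥ (A *ᵥ Mᵀ j) - 2 * (Mᵀ j ⬝ᵥ gᵀ j) + lam * ∑ i, |Mᵀ j i|) := by
  rw [Finset.sum_add_distrib, Finset.sum_sub_distrib, ← Finset.mul_sum, ← Finset.mul_sum,
    Finset.sum_comm, Matrix.mul_assoc]
  rfl

theorem aux_sep {n p : ℕ} (A : Matrix (Fin n) (Fin n) ℝ) (g B : Matrix (Fin n) (Fin p) ℝ)
    (lam : ℝ) (hmin : ∀ M : Matrix (Fin n) (Fin p) ℝ,
      Matrix.trace (Bᵀ * A * B) - 2 * Matrix.trace (Bᵀ * g) + lam * ∑ i, ∑ j, |B i j| ≤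
        Matrix.trace (Mᵀ * A * M) - 2 * Matrix.trace (Mᵀ * g) + lam * ∑ i, ∑ j, |M i j|)
    (j : Fin p) (x : Fin n → ℝ) :
    Bᵀ j ⬝ᵥ (A *ᵥ Bᵀ j) - 2 * (Bᵀ j ⬝ᵥ gᵀ j) + lam * ∑ i, |Bᵀ j i| ≤
      x ⬝ᵥ (A *ᵥ x) - 2 * (x ⬝ᵥ gᵀ j) + lam * ∑ i, |x i| := by
  have h := hmin (B.updateCol j x)
  rw [aux_obj, aux_obj, ← Finset.add_sum_erase _ _ (Finset.mem_univ j),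
    ← Finset.add_sum_erase _ _ (Finset.mem_univ j)] at h
  have hj : (B.updateCol j x)ᵀ j = x := by ext i; simp
  have hk : ∀ k ∈ Finset.univ.erase j, (B.updateCol j x)ᵀ k = Bᵀ k := by
    intro k hk
    ext i
    simp [Matrix.updateCol_ne (Finset.ne_of_mem_erase hk)]
  have hsum : ∑ k ∈ Finset.univ.erase j, ((B.updateCol j x)ᵀ k ⬝ᵥ (A *ᵥ (B.updateCol j x)ᵀ k)
      - 2 * ((B.updateCol j x)ᵀ k ⬝ᵥ gᵀ k) + lam * ∑ i, |(B.updateCol j x)ᵀ k i|)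
      = ∑ k ∈ Finset.univ.erase j,
        (Bᵀ k ⬝ᵥ (A *ᵥ Bᵀ k) - 2 * (Bᵀ k ⬝ᵥ gᵀ k) + lam * ∑ i, |Bᵀ k i|) :=
    Finset.sum_congr rfl fun k hk' => by rw [hk k hk']
  rw [hj, hsum] at h
  linarith

theorem aux_thr (x y t : ℝ) (h : |x - y| ≤ t) (hs : y ≠ 0 → 2 * t < |y|) :
    Real.sign (if t < |x| then x else 0) = Real.sign y := by
  have ht : 0 ≤ t := (abs_nonneg _).trans h
  rw [abs_le] at h
  rcases lt_trichotomy y 0 with hy | hy | hy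
  · have h1 := hs hy.ne
    rw [abs_of_neg hy] at h1
    have hx : x < 0 := by linarith
    rw [abs_of_neg hx, if_pos (by linarith), Real.sign_of_neg hx, Real.sign_of_neg hy]
  · subst hy
    rw [if_neg]
    rw [not_lt, abs_le]
    constructor <;> linarith
  · have h1 := hs hy.ne'
    rw [abs_of_pos hy] at h1
    have hx : 0 < x := by linarith
    rw [abs_of_pos hx, if_pos (by linarith), Real.sign_of_pos hx, Real.sign_of_pos hy]

theorem stmt9 (p d : ℕ) (mxi δ lam : ℝ) (hmxi : 0 < mxi) (hδ : 0 < δ)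
    (G : Matrix (Fin (p * d)) (Fin (p * d)) ℝ) (hG : G.IsHermitian)
    (heig : ∀ i, 2 * Real.pi * mxi ≤ hG.eigenvalues i)
    (g β : Matrix (Fin (p * d)) (Fin p) ℝ) (hβ : β = G⁻¹ * g)
    (Ghat : Matrix (Fin (p * d)) (Fin (p * d)) ℝ) (hGhat : Ghat.PosSemidef)
    (ghat : Matrix (Fin (p * d)) (Fin p) ℝ)
    (hGd : ∀ i j, |Ghat i j - G i j| ≤ δ) (hgd : ∀ i j, |ghat i j - g i j| ≤ δ)
    (hsin : (maxColSupport β : ℝ) * δ ≤ Real.pi * mxi / 16)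
    (hlam : 4 * (colOneNorm β + 1) * δ ≤ lam)
    (βhat : Matrix (Fin (p * d)) (Fin p) ℝ)
    (hmin : ∀ M : Matrix (Fin (p * d)) (Fin p) ℝ,
      Matrix.trace (βhatᵀ * Ghat * βhat) - 2 * Matrix.trace (βhatᵀ * ghat) +
          lam * ∑ i, ∑ j, |βhat i j| ≤
        Matrix.trace (Mᵀ * Ghat * M) - 2 * Matrix.trace (Mᵀ * ghat) +
          lam * ∑ i, ∑ j, |M i j|)
    (hsignal : ∀ i j, β i j ≠ 0 →
      2 * min (4 * colOneNorm G⁻¹ * lam)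
          (6 * Real.sqrt (maxColSupport β) * lam / (Real.pi * mxi)) < |β i j|) :
    (∀ i j,
      Real.sign (hardThreshold βhat
        (min (4 * colOneNorm G⁻¹ * lam)
          (6 * Real.sqrt (maxColSupport β) * lam / (Real.pi * mxi))) i j) =
        Real.sign (β i j)) ∧
    (∀ i j,
      hardThreshold βhat
        (min (4 * colOneNorm G⁻¹ * lam)
          (6 * Real.sqrt (maxColSupport β) * lam / (Real.pi * mxi))) i j ≠ 0 ↔
        β i j ≠ 0) := by
  have hc : 0 < Real.pi * mxi := mul_pos Real.pi_pos hmxi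
  have hpd : G.PosDef := by
    rw [hG.posDef_iff_eigenvalues_pos]
    intro i
    have := heig i
    linarith
  have hu : IsUnit G.det := (Matrix.isUnit_iff_isUnit_det G).mp hpd.isUnit
  have hGb : G * β = g := by rw [hβ, Matrix.mul_nonsing_inv_cancel_left _ _ hu]
  have key : ∀ i j, |βhat i j - β i j| ≤ min (4 * colOneNorm G⁻¹ * lam)
          (6 * Real.sqrt (maxColSupport β) * lam / (Real.pi * mxi)) := by
    intro i j
    refine aux_vec (Real.pi * mxi) δ lam (colOneNorm β) (maxColSupport β) hc hδ G ?_ hG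
      (Matrix.nonsing_inv_mul _ hu) Ghat hGhat (gᵀ j) (βᵀ j) (ghatᵀ j) (βhatᵀ j) ?_ hGd
      (fun i => hgd i j) ?_ hsin (aux_col_le β j) hlam (aux_sep Ghat ghat βhat lam hmin j) i
    · intro x
      have := aux_quad G hG _ heig x
      linarith
    · rw [← hGb]; rfl
    · exact Finset.le_sup (f := fun j : Fin p =>
        (Finset.univ.filter fun i : Fin (p * d) => β i j ≠ 0).card) (Finset.mem_univ j)
  have hsign := fun i j => aux_thr (βhat i j) (β i j) _ (key i j) (hsignal i j)
  refine ⟨fun i j => hsign i j, fun i j => ?_⟩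
  have h1 := hsign i j
  unfold hardThreshold
  rw [Matrix.of_apply, not_iff_not, ← Real.sign_eq_zero_iff, h1, Real.sign_eq_zero_iff]
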